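/- arXiv:1010.5769 — 2 statements merged into one kernel-verified Lean document; each statement's English description precedes it below -/
import Mathlib

section
/- For every integer k ≥ 1, the functions C_k satisfy the recurrence C_k(q) = (1/(2k·(2k−1))) · ( (2·C_1(q) + (k−1)²)·C_{k−1}(q) − q·(d/dq)C_{k−1}(q) ) for all complex q with |q| < 1, where C_0(q) = 1 and the derivative is the complex derivative with respect to q. -/
/-- MacMahon's odd generalized sum-of-divisors function `C_k(q)`, defined as the sum over all
strictly increasing `k`-tuples of positive integers.  For `k = 0` it equals `1`. -/
noncomputable def macC (k : ℕ) (q : ℂ) : ℂ :=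
  ∑' m : {m : Fin k → ℕ // StrictMono m ∧ ∀ i, 0 < m i},
    q ^ (∑ i, (2 * m.1 i - 1)) / ∏ i, (1 - q ^ (2 * m.1 i - 1)) ^ 2

/-!
With `T_n` the Chebyshev polynomials, the Jacobi triple product reads
`∑ n : ℤ, T_n(w) (-q) ^ n ^ 2 = ∏ (1 - q ^ (2j)) * ∏ (1 - 2 w q ^ (2j - 1) + q ^ (4j - 2))`.
Since `1 - 2 w x + x ^ 2 = (1 - x) ^ 2 * (1 - 2 (w - 1) x / (1 - x) ^ 2)`, the coefficient of
`(w - 1) ^ k` on the right is `(-2) ^ k * C_k(q)` times a nonvanishing factor independent of `k`.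
Call it `θ_k`, so that `(-2) ^ k * C_k = θ_k / θ_0`. On the left, `q * d/dq` multiplies the `n`-th
term by `n ^ 2`, and the Chebyshev differential equation at `w = 1` turns this into the heat
equation `q * θ_k' = k ^ 2 * θ_k + (2k + 1) (k + 1) * θ_(k+1)`. The recurrence is the quotient rule
for `θ_k / θ_0`.
-/

open Filter Finset Polynomial Topology
open Polynomial.Chebyshev (T)

namespace MacMahon

/-- The coefficient of `(w - 1) ^ k` in the Chebyshev polynomial `T_n(w)`. -/
noncomputable def chebyshevCoeff (R : Type*) [CommRing R] (k : ℕ) (n : ℤ) : R :=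
  (taylor 1 (T R n)).coeff k

theorem chebyshevCoeff_zero {R : Type*} [CommRing R] (n : ℤ) : chebyshevCoeff R 0 n = 1 := by
  rw [chebyshevCoeff, taylor_coeff_zero, Chebyshev.T_eval_one]

theorem chebyshevCoeff_succ {R : Type*} [CommRing R] [IsDomain R] [CharZero R] (k : ℕ) (n : ℤ) :
    ((2 * k + 1) * (k + 1) : R) * chebyshevCoeff R (k + 1) n =
      ((n : R) ^ 2 - (k : R) ^ 2) * chebyshevCoeff R k n := by
  have hderiv (j : ℕ) : (derivative^[j] (T R n)).eval 1 = j.factorial * chebyshevCoeff R j n := by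
    rw [chebyshevCoeff, taylor_coeff, ← factorial_smul_hasseDeriv, LinearMap.smul_apply, eval_smul,
      nsmul_eq_mul]
  have h := Chebyshev.iterate_derivative_T_eval_one_recurrence (R := R) n k
  rw [hderiv, hderiv, Nat.factorial_succ] at h
  refine mul_left_cancel₀ (Nat.cast_ne_zero.2 k.factorial_ne_zero : (k.factorial : R) ≠ 0) ?_
  push_cast at h
  linear_combination h

theorem norm_chebyshevCoeff_le (k : ℕ) (n : ℤ) :
    ‖chebyshevCoeff ℂ k n‖ ≤ ((n.natAbs ^ 2 : ℕ) : ℝ) ^ k := by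
  have hcast : ((n.natAbs ^ 2 : ℕ) : ℝ) = (n : ℝ) ^ 2 := by
    rw [Nat.cast_pow, Nat.cast_natAbs, Int.cast_abs, sq_abs]
  rw [hcast]
  induction k with
  | zero => simp [chebyshevCoeff_zero]
  | succ k ih =>
    have hk : 0 < (2 * k + 1) * (k + 1 : ℝ) := by positivity
    have hrec : (2 * k + 1) * (k + 1 : ℝ) * ‖chebyshevCoeff ℂ (k + 1) n‖ =
        |(n : ℝ) ^ 2 - k ^ 2| * ‖chebyshevCoeff ℂ k n‖ := by
      have h : (((2 * k + 1) * (k + 1) : ℝ) : ℂ) * chebyshevCoeff ℂ (k + 1) n =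
          ((n ^ 2 - k ^ 2 : ℝ) : ℂ) * chebyshevCoeff ℂ k n := by
        push_cast
        exact chebyshevCoeff_succ k n
      rw [← Real.norm_of_nonneg hk.le, ← Complex.norm_real, ← norm_mul, h, norm_mul,
        Complex.norm_real, Real.norm_eq_abs]
    refine le_of_mul_le_mul_left (hrec.trans_le ?_) hk
    rcases eq_or_ne n 0 with rfl | hn
    · cases k <;> simp_all
    · have hpos : 0 < n ^ 2 := by positivity
      have hn1 : (1 : ℝ) ≤ (n : ℝ) ^ 2 := by exact_mod_cast hpos
      have hle : |(n : ℝ) ^ 2 - k ^ 2| ≤ (2 * k + 1) * (k + 1) * (n : ℝ) ^ 2 := by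
        rw [abs_le]
        constructor <;> nlinarith [mul_nonneg k.cast_nonneg (sub_nonneg.2 hn1)]
      calc
        _ ≤ (2 * k + 1) * (k + 1) * (n : ℝ) ^ 2 * ((n : ℝ) ^ 2) ^ k := by gcongr
        _ = _ := by ring

section Finite

variable {K : Type*} [Field K]

/-- The `q`-Pochhammer symbol `(q; q)_n`. -/
def qPoch (q : K) (n : ℕ) : K :=
  ∏ j ∈ range n, (1 - q ^ (j + 1))

/-- The reciprocal `1 / (q; q)_n`, extended by `0` to negative `n` (like `1 / Γ`), so that Gaussian
binomial coefficients written with it vanish outside their range. -/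
def qPochInv (q : K) : ℤ → K
  | .ofNat n => (qPoch q n)⁻¹
  | .negSucc _ => 0

/-- The Gaussian binomial coefficient `[2N choose N + n]_q`, which vanishes for `N < |n|`. -/
def centralGaussBinom (q : K) (N : ℕ) (n : ℤ) : K :=
  qPoch q (2 * N) * (qPochInv q (N + n) * qPochInv q (N - n))

theorem qPoch_succ (q : K) (n : ℕ) : qPoch q (n + 1) = qPoch q n * (1 - q ^ (n + 1)) :=
  prod_range_succ _ _

theorem qPochInv_natCast (q : K) (n : ℕ) : qPochInv q n = (qPoch q n)⁻¹ :=
  rfl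

theorem qPochInv_zero (q : K) : qPochInv q 0 = 1 := by
  simpa [qPoch] using qPochInv_natCast q 0

theorem qPochInv_of_neg (q : K) {n : ℤ} (hn : n < 0) : qPochInv q n = 0 := by
  obtain ⟨m, rfl⟩ := Int.eq_negSucc_of_lt_zero hn
  rfl

theorem qPochInv_sub_one {q : K} (hq : ∀ m ≠ 0, q ^ m ≠ 1) (n : ℕ) :
    qPochInv q (n - 1) = (1 - q ^ n) * qPochInv q n := by
  cases n with
  | zero => simp [qPochInv_of_neg]
  | succ n =>
    have hn : 1 - q ^ (n + 1) ≠ 0 := sub_ne_zero.2 (hq _ n.succ_ne_zero).symm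
    rw [Nat.cast_succ, add_sub_cancel_right, ← Nat.cast_succ, qPochInv_natCast, qPochInv_natCast,
      qPoch_succ, mul_inv, mul_comm, inv_mul_cancel_right₀ hn]

theorem qPochInv_sub_two {q : K} (hq : ∀ m ≠ 0, q ^ m ≠ 1) (n : ℕ) :
    qPochInv q (n - 2) = (1 - q ^ (n - 1)) * (1 - q ^ n) * qPochInv q n := by
  cases n with
  | zero => simp [qPochInv_of_neg]
  | succ n =>
    rw [show ((n + 1 : ℕ) : ℤ) - 2 = n - 1 by push_cast; ring, qPochInv_sub_one hq, mul_assoc,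
      ← qPochInv_sub_one hq (n + 1), Nat.cast_succ, add_sub_cancel_right, Nat.add_sub_cancel]

theorem centralGaussBinom_eq_zero (q : K) {N : ℕ} {n : ℤ} (hn : N < |n|) :
    centralGaussBinom q N n = 0 := by
  rcases lt_abs.1 hn with h | h
  · rw [centralGaussBinom, qPochInv_of_neg q (n := N - n) (by lia), mul_zero, mul_zero]
  · rw [centralGaussBinom, qPochInv_of_neg q (n := N + n) (by lia), zero_mul, mul_zero]

theorem centralGaussBinom_succ {q : K} (hq : ∀ m ≠ 0, q ^ m ≠ 1) {N a b : ℕ} {n : ℤ}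
    (ha : (a : ℤ) = N + 1 + n) (hb : (b : ℤ) = N + 1 - n) :
    centralGaussBinom q (N + 1) n = (1 + q ^ (2 * N + 1)) * centralGaussBinom q N n +
      q ^ b * centralGaussBinom q N (n - 1) + q ^ a * centralGaussBinom q N (n + 1) := by
  have hab : 2 * N + 2 = a + b := by lia
  have ha1 : q ^ a * q ^ (b - 1) * (1 - q ^ b) = q ^ (2 * N + 1) * (1 - q ^ b) := by
    rcases b.eq_zero_or_pos with rfl | h
    · simp
    · rw [← pow_add, show a + (b - 1) = 2 * N + 1 by lia]
  have hb1 : q ^ b * q ^ (a - 1) * (1 - q ^ a) = q ^ (2 * N + 1) * (1 - q ^ a) := by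
    rcases a.eq_zero_or_pos with rfl | h
    · simp
    · rw [← pow_add, show b + (a - 1) = 2 * N + 1 by lia]
  have hpoch : qPoch q (2 * (N + 1)) =
      qPoch q (2 * N) * (1 - q ^ (2 * N + 1)) * (1 - q ^ a * q ^ b) := by
    rw [mul_add_one, qPoch_succ, qPoch_succ, ← pow_add, ← hab]
  simp only [centralGaussBinom]
  rw [hpoch, show ((N + 1 : ℕ) : ℤ) + n = a by push_cast; lia,
    show ((N + 1 : ℕ) : ℤ) - n = b by push_cast; lia,
    show (N : ℤ) + n = a - 1 by lia, show (N : ℤ) - n = b - 1 by lia,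
    show (N : ℤ) + (n - 1) = a - 2 by lia, show (N : ℤ) - (n - 1) = b by lia,
    show (N : ℤ) + (n + 1) = a by lia, show (N : ℤ) - (n + 1) = b - 2 by lia,
    qPochInv_sub_one hq, qPochInv_sub_one hq, qPochInv_sub_two hq, qPochInv_sub_two hq]
  linear_combination qPoch q (2 * N) * qPochInv q a * qPochInv q b * (ha1 + hb1)

theorem sum_Icc_add_of_eq_zero {M : Type*} [AddCommMonoid M] {f : ℤ → M} {N : ℕ}
    (hf : ∀ n : ℤ, N < |n| → f n = 0) {d : ℤ} (hd : |d| ≤ 1) :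
    ∑ n ∈ Icc (-((N + 1 : ℕ) : ℤ)) (N + 1 : ℕ), f (n + d) = ∑ n ∈ Icc (-(N : ℤ)) N, f n := by
  have hd' := abs_le.1 hd
  refine (sum_map _ (addRightEmbedding d) f).symm.trans ?_
  rw [map_add_right_Icc]
  refine (sum_subset (Icc_subset_Icc (by push_cast; lia) (by push_cast; lia)) ?_).symm
  intro n _ hn
  exact hf n (lt_of_not_ge fun h => hn (mem_Icc.2 (abs_le.1 h)))

theorem pow_natAbs_sq_mul_centralGaussBinom_succ {q : K} (hq : ∀ m ≠ 0, (q ^ 2) ^ m ≠ 1) {N : ℕ}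
    {n : ℤ} (hn : |n| ≤ N + 1) :
    q ^ n.natAbs ^ 2 * centralGaussBinom (q ^ 2) (N + 1) n =
      (1 + q ^ (2 * (2 * N + 1))) * (q ^ n.natAbs ^ 2 * centralGaussBinom (q ^ 2) N n) +
      q ^ (2 * N + 1) * (q ^ (n - 1).natAbs ^ 2 * centralGaussBinom (q ^ 2) N (n - 1) +
        q ^ (n + 1).natAbs ^ 2 * centralGaussBinom (q ^ 2) N (n + 1)) := by
  obtain ⟨hn₁, hn₂⟩ := abs_le.1 hn
  obtain ⟨a, ha⟩ := Int.eq_ofNat_of_zero_le (a := N + 1 + n) (by lia)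
  obtain ⟨b, hb⟩ := Int.eq_ofNat_of_zero_le (a := N + 1 - n) (by lia)
  have hpred : q ^ (2 * N + 1) * q ^ (n - 1).natAbs ^ 2 = q ^ n.natAbs ^ 2 * (q ^ 2) ^ b := by
    rw [← pow_mul, ← pow_add, ← pow_add]
    congr 1
    zify
    rw [sq_abs, sq_abs]
    linear_combination 2 * hb
  have hsucc : q ^ (2 * N + 1) * q ^ (n + 1).natAbs ^ 2 = q ^ n.natAbs ^ 2 * (q ^ 2) ^ a := by
    rw [← pow_mul, ← pow_add, ← pow_add]
    congr 1
    zify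
    rw [sq_abs, sq_abs]
    linear_combination 2 * ha
  rw [centralGaussBinom_succ hq ha.symm hb.symm, ← pow_mul]
  linear_combination -centralGaussBinom (q ^ 2) N (n - 1) * hpred -
    centralGaussBinom (q ^ 2) N (n + 1) * hsucc

theorem C_mul_T_mul_one_add (c s : K) (n : ℤ) :
    C c * T K n * (1 + C (2 * s) * X + C (s ^ 2)) =
      C ((1 + s ^ 2) * c) * T K n + (C (s * c) * T K (n + 1) + C (s * c) * T K (n - 1)) := by
  rw [Chebyshev.T_add_one]
  simp only [map_mul, map_add, map_one, map_pow, map_ofNat]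
  ring

/-- The finite form of the Jacobi triple product, in the variable `X = (z + z⁻¹) / 2`. -/
theorem prod_one_add_eq_sum_centralGaussBinom_mul_T {q : K} (hq : ∀ m ≠ 0, (q ^ 2) ^ m ≠ 1)
    (N : ℕ) :
    ∏ j ∈ range N, (1 + C (2 * q ^ (2 * j + 1)) * X + C (q ^ (2 * (2 * j + 1)))) =
      ∑ n ∈ Icc (-(N : ℤ)) N, C (q ^ n.natAbs ^ 2 * centralGaussBinom (q ^ 2) N n) * T K n := by
  induction N with
  | zero => simp [centralGaussBinom, qPoch, qPochInv_zero]
  | succ N ih =>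
    rw [prod_range_succ, ih, sum_mul]
    set c : ℤ → K := fun n => q ^ n.natAbs ^ 2 * centralGaussBinom (q ^ 2) N n with hc
    have hc0 (n : ℤ) (hn : N < |n|) : c n = 0 := by
      simp only [hc, centralGaussBinom_eq_zero _ hn, mul_zero]
    set s := q ^ (2 * N + 1)
    have hsq : q ^ (2 * (2 * N + 1)) = s ^ 2 := by rw [mul_comm, pow_mul]
    have hstep (n : ℤ) (hn : n ∈ Icc (-((N + 1 : ℕ) : ℤ)) (N + 1 : ℕ)) :
        C (q ^ n.natAbs ^ 2 * centralGaussBinom (q ^ 2) (N + 1) n) * T K n =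
          C ((1 + s ^ 2) * c (n + 0)) * T K (n + 0) +
            (C (s * c (n + -1)) * T K (n + -1 + 1) + C (s * c (n + 1)) * T K (n + 1 - 1)) := by
      rw [pow_natAbs_sq_mul_centralGaussBinom_succ hq (abs_le.2 (by simpa using hn)), hsq]
      simp only [hc, add_zero, ← sub_eq_add_neg, sub_add_cancel, add_sub_cancel_right, map_add,
        map_mul]
      ring
    simp only [hsq, C_mul_T_mul_one_add]
    rw [sum_congr rfl hstep, sum_add_distrib, sum_add_distrib, sum_add_distrib, sum_add_distrib,
      sum_Icc_add_of_eq_zero (f := fun n => C ((1 + s ^ 2) * c n) * T K n) _ (by simp),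
      sum_Icc_add_of_eq_zero (f := fun n => C (s * c n) * T K (n + 1)) _ (by simp),
      sum_Icc_add_of_eq_zero (f := fun n => C (s * c n) * T K (n - 1)) _ (by simp)]
    all_goals
      intro n hn
      simp [hc0 n hn]

/-- The summand `q ^ (2j + 1) / (1 - q ^ (2j + 1)) ^ 2` of MacMahon's `C_1`, indexed from `0`. -/
def oddTerm (q : K) (j : ℕ) : K :=
  q ^ (2 * j + 1) / (1 - q ^ (2 * j + 1)) ^ 2

theorem coeff_prod_one_add_C_mul_X {R ι : Type*} [CommSemiring R] (s : Finset ι) (f : ι → R)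
    (k : ℕ) :
    (∏ i ∈ s, (1 + C (f i) * X)).coeff k = ∑ t ∈ s.powersetCard k, ∏ i ∈ t, f i := by
  classical
  simp only [prod_one_add, prod_mul_distrib, prod_const, ← map_prod, finsetSum_coeff,
    coeff_C_mul_X_pow, powersetCard_eq_filter, sum_filter, eq_comm (a := k)]

theorem taylor_one_prod_one_add {q : K} (hq : ∀ m ≠ 0, q ^ m ≠ 1) (N : ℕ) :
    taylor 1 (∏ j ∈ range N,
        (1 + C (2 * (-q) ^ (2 * j + 1)) * X + C ((-q) ^ (2 * (2 * j + 1))))) =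
      C ((∏ j ∈ range N, (1 - q ^ (2 * j + 1))) ^ 2) *
        ∏ j ∈ range N, (1 + C (-2 * oddTerm q j) * X) := by
  rw [← taylorAlgHom_apply, map_prod, ← prod_pow, map_prod, ← prod_mul_distrib]
  refine prod_congr rfl fun j _ => ?_
  have hj : 1 - q ^ (2 * j + 1) ≠ 0 := sub_ne_zero.2 (hq _ (by lia)).symm
  have hterm : (1 - q ^ (2 * j + 1)) ^ 2 * (-2 * oddTerm q j) = -2 * q ^ (2 * j + 1) := by
    rw [oddTerm, mul_left_comm, mul_div_cancel₀ _ (pow_ne_zero 2 hj)]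
  rw [mul_add (C _), ← mul_assoc (C _), ← C_mul, hterm, pow_mul', Odd.neg_pow ⟨j, rfl⟩,
    taylorAlgHom_apply]
  simp only [map_add, taylor_one, taylor_mul, taylor_C, taylor_X]
  simp only [map_mul, map_neg, map_pow, map_sub, map_one, map_ofNat]
  ring

theorem sum_chebyshevCoeff_mul_centralGaussBinom {q : K} (hq : ∀ m ≠ 0, q ^ m ≠ 1) (N k : ℕ) :
    ∑ n ∈ Icc (-(N : ℤ)) N,
        chebyshevCoeff K k n * ((-q) ^ n.natAbs ^ 2 * centralGaussBinom (q ^ 2) N n) =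
      (∏ j ∈ range N, (1 - q ^ (2 * j + 1))) ^ 2 *
        ((-2) ^ k * ∑ t ∈ (range N).powersetCard k, ∏ j ∈ t, oddTerm q j) := by
  have hq2 (m : ℕ) (hm : m ≠ 0) : ((-q) ^ 2) ^ m ≠ 1 := by
    rw [neg_sq, ← pow_mul]
    exact hq _ (mul_ne_zero two_ne_zero hm)
  calc
    _ = (taylor 1 (∑ n ∈ Icc (-(N : ℤ)) N,
          C ((-q) ^ n.natAbs ^ 2 * centralGaussBinom ((-q) ^ 2) N n) * T K n)).coeff k := by
      simp only [map_sum, taylor_mul, taylor_C, finsetSum_coeff, coeff_C_mul, neg_sq]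
      exact sum_congr rfl fun n _ => mul_comm _ _
    _ = (∏ j ∈ range N, (1 - q ^ (2 * j + 1))) ^ 2 *
          ∑ t ∈ (range N).powersetCard k, ∏ j ∈ t, -2 * oddTerm q j := by
      rw [← prod_one_add_eq_sum_centralGaussBinom_mul_T hq2, taylor_one_prod_one_add hq,
        coeff_C_mul, coeff_prod_one_add_C_mul_X]
    _ = _ := by
      congr 1
      rw [mul_sum]
      refine sum_congr rfl fun t ht => ?_
      rw [← (mem_powersetCard.1 ht).2, prod_mul_distrib, prod_const]

end Finite

section Limit

variable {K : Type*} [NormedField K] {q : K} (hq : ‖q‖ < 1)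

include hq

theorem one_sub_norm_le_norm_one_sub_pow {m : ℕ} (hm : m ≠ 0) : 1 - ‖q‖ ≤ ‖1 - q ^ m‖ :=
  calc
    1 - ‖q‖ ≤ 1 - ‖q‖ ^ m := sub_le_sub_left (pow_le_of_le_one (norm_nonneg q) hq.le hm) 1
    _ ≤ ‖1 - q ^ m‖ := by simpa using norm_sub_norm_le (1 : K) (q ^ m)

theorem pow_ne_one_of_norm_lt_one {m : ℕ} (hm : m ≠ 0) : q ^ m ≠ 1 := fun h => by
  simpa [h, hq.not_ge] using one_sub_norm_le_norm_one_sub_pow hq hm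

theorem summable_norm_oddTerm : Summable fun j => ‖oddTerm q j‖ := by
  have hr : 0 < 1 - ‖q‖ := sub_pos.2 hq
  have hinj : Function.Injective fun j : ℕ => 2 * j + 1 := fun i j h => by simpa using h
  refine .of_nonneg_of_le (fun j => norm_nonneg _) (fun j => ?_)
    (((summable_geometric_of_lt_one (norm_nonneg q) hq).comp_injective hinj).div_const
      ((1 - ‖q‖) ^ 2))
  rw [oddTerm, norm_div, norm_pow, norm_pow]
  exact div_le_div_of_nonneg_left (by positivity) (by positivity)
    (pow_le_pow_left₀ hr.le (one_sub_norm_le_norm_one_sub_pow hq (by lia)) 2)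

theorem tendsto_prod_one_sub_pow [CompleteSpace K] {f : ℕ → ℕ} (hf : Function.Injective f)
    (hf0 : ∀ j, f j ≠ 0) :
    ∃ L ≠ 0, Tendsto (fun N => ∏ j ∈ range N, (1 - q ^ f j)) atTop (𝓝 L) := by
  have hsum : Summable fun j => ‖-q ^ f j‖ := by
    simp only [norm_neg, norm_pow]
    exact (summable_geometric_of_lt_one (norm_nonneg q) hq).comp_injective hf
  simp only [sub_eq_add_neg]
  refine ⟨∏' j, (1 + -q ^ f j), tprod_one_add_ne_zero_of_summable (fun j => ?_) hsum,
    (multipliable_one_add_of_summable hsum).tendsto_prod_tprod_nat⟩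
  rw [← sub_eq_add_neg]
  exact sub_ne_zero.2 (pow_ne_one_of_norm_lt_one hq (hf0 j)).symm

theorem tendsto_qPoch [CompleteSpace K] : ∃ L ≠ 0, Tendsto (qPoch q) atTop (𝓝 L) :=
  tendsto_prod_one_sub_pow hq Nat.succ_injective Nat.succ_ne_zero

theorem exists_norm_qPochInv_le [CompleteSpace K] : ∃ B, ∀ n, ‖qPochInv q n‖ ≤ B := by
  obtain ⟨L, hL0, hL⟩ := tendsto_qPoch hq
  obtain ⟨B, hB⟩ := (hL.inv₀ hL0).norm.bddAbove_range
  refine ⟨B, fun n => ?_⟩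
  cases n with
  | ofNat n => exact hB ⟨n, rfl⟩
  | negSucc n => exact norm_zero.trans_le ((norm_nonneg _).trans (hB ⟨0, rfl⟩))

theorem exists_norm_centralGaussBinom_le [CompleteSpace K] :
    ∃ B, ∀ N n, ‖centralGaussBinom q N n‖ ≤ B := by
  obtain ⟨L, -, hL⟩ := tendsto_qPoch hq
  obtain ⟨A, hA⟩ := hL.norm.bddAbove_range
  obtain ⟨B, hB⟩ := exists_norm_qPochInv_le hq
  have hB0 : 0 ≤ B := (norm_nonneg _).trans (hB 0)
  refine ⟨A * (B * B), fun N n => ?_⟩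
  rw [centralGaussBinom, norm_mul, norm_mul]
  gcongr
  exacts [(norm_nonneg _).trans (hA ⟨0, rfl⟩), hA ⟨_, rfl⟩, hB _, hB _]

theorem tendsto_centralGaussBinom [CompleteSpace K] :
    ∃ L ≠ 0, ∀ n, Tendsto (fun N => centralGaussBinom q N n) atTop (𝓝 L) := by
  obtain ⟨L, hL0, hL⟩ := tendsto_qPoch hq
  have hinv : Tendsto (qPochInv q) atTop (𝓝 L⁻¹) := by
    rw [← Nat.map_cast_int_atTop, tendsto_map'_iff]
    exact hL.inv₀ hL0
  have hshift (n : ℤ) : Tendsto (fun N : ℕ => qPochInv q (N + n)) atTop (𝓝 L⁻¹) :=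
    hinv.comp (tendsto_atTop_add_const_right _ n tendsto_natCast_atTop_atTop)
  have hdouble : Tendsto (fun N => qPoch q (2 * N)) atTop (𝓝 L) :=
    hL.comp (tendsto_id.const_mul_atTop' two_pos)
  exact ⟨L * (L⁻¹ * L⁻¹), by simp [hL0], fun n => hdouble.mul ((hshift n).mul (hshift (-n)))⟩

end Limit

/-- Strictly increasing `k`-tuples of natural numbers, shifted by one to become tuples of positive
integers: the index set of `macC k`. -/
def shiftEquiv (k : ℕ) : (Fin k ↪o ℕ) ≃ {m : Fin k → ℕ // StrictMono m ∧ ∀ i, 0 < m i} where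
  toFun e := ⟨fun i => e i + 1, fun _ _ h => Nat.succ_lt_succ (e.strictMono h),
    fun _ => Nat.succ_pos _⟩
  invFun m := OrderEmbedding.ofStrictMono (fun i => m.1 i - 1) fun i _ h =>
    Nat.pred_lt_pred (m.2.2 i).ne' (m.2.1 h)
  left_inv _ := rfl
  right_inv m := Subtype.ext <| funext fun i => Nat.succ_pred_eq_of_pos (m.2.2 i)

theorem macC_eq_tsum_prod_oddTerm (k : ℕ) (q : ℂ) :
    macC k q = ∑' s : Set.powersetCard ℕ k, ∏ j ∈ s.1, oddTerm q j := by
  rw [macC, ← (shiftEquiv k).tsum_eq, ← Set.powersetCard.ofFinEmbEquiv.tsum_eq]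
  refine tsum_congr fun e => ?_
  have he : (Set.powersetCard.ofFinEmbEquiv e).1 = univ.map e.toEmbedding := rfl
  rw [he, prod_map, ← prod_pow_eq_pow_sum, ← prod_div_distrib]
  rfl

@[simp]
theorem macC_zero (q : ℂ) : macC 0 q = 1 := by
  simp [macC, Subsingleton.strictMono]

theorem tendsto_sum_powersetCard_prod {R : Type*} [NormedCommRing R] [CompleteSpace R] {f : ℕ → R}
    (hf : Summable fun s : Finset ℕ => ∏ j ∈ s, f j) (k : ℕ) :
    Tendsto (fun N => ∑ t ∈ (range N).powersetCard k, ∏ j ∈ t, f j) atTop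
      (𝓝 (∑' s : Set.powersetCard ℕ k, ∏ j ∈ s.1, f j)) := by
  classical
  have hsum : HasSum ((Set.powersetCard ℕ k).indicator fun s => ∏ j ∈ s, f j)
      (∑' s : Set.powersetCard ℕ k, ∏ j ∈ s.1, f j) :=
    hasSum_subtype_iff_indicator.1 (hf.subtype (Set.powersetCard ℕ k)).hasSum
  have hlim := hsum.comp (tendsto_finset_powerset_atTop_atTop.comp tendsto_finset_range)
  refine hlim.congr fun N => ?_
  simp only [Function.comp_apply, Set.indicator_apply, Set.powersetCard.mem_iff,
    powersetCard_eq_filter, sum_filter]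

/-- The `k`-th Taylor coefficient at `w = 1` of the theta series `∑ n, T_n(w) (-q) ^ n ^ 2`, which
for `w = cos (2 z)` is the Jacobi theta function `ϑ₄(z, q)`. -/
noncomputable def theta (k : ℕ) (q : ℂ) : ℂ :=
  ∑' n : ℤ, chebyshevCoeff ℂ k n * (-q) ^ n.natAbs ^ 2

theorem summable_natAbs_sq_pow_mul_pow (k : ℕ) {r : ℝ} (hr0 : 0 ≤ r) (hr : r < 1) :
    Summable fun n : ℤ => ((n.natAbs ^ 2 : ℕ) : ℝ) ^ k * r ^ n.natAbs ^ 2 := by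
  have hgeom : Summable fun m : ℕ => (m : ℝ) ^ k * r ^ m :=
    summable_pow_mul_geometric_of_norm_lt_one k (by rwa [Real.norm_of_nonneg hr0])
  have hsq := hgeom.comp_injective (Nat.pow_left_injective two_ne_zero)
  refine .of_nat_of_neg (hsq.congr fun m => ?_) (hsq.congr fun m => ?_)
  · rw [Int.natAbs_natCast, Function.comp_apply]
  · rw [Int.natAbs_neg, Int.natAbs_natCast, Function.comp_apply]

theorem norm_theta_summand_le (k : ℕ) (n : ℤ) {q : ℂ} {r : ℝ} (hq : ‖q‖ ≤ r) :
    ‖chebyshevCoeff ℂ k n * (-q) ^ n.natAbs ^ 2‖ ≤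
      ((n.natAbs ^ 2 : ℕ) : ℝ) ^ k * r ^ n.natAbs ^ 2 := by
  rw [norm_mul, norm_pow, norm_neg]
  exact mul_le_mul (norm_chebyshevCoeff_le k n) (pow_le_pow_left₀ (norm_nonneg q) hq _)
    (by positivity) (by positivity)

theorem mul_deriv_const_mul_neg_pow (c q : ℂ) (m : ℕ) :
    q * deriv (fun w => c * (-w) ^ m) q = m * (c * (-q) ^ m) := by
  rw [(((hasDerivAt_neg q).fun_pow m).const_mul c).deriv]
  cases m with
  | zero => simp
  | succ m =>
    rw [Nat.add_sub_cancel, pow_succ]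
    ring

section Disc

variable {q : ℂ} (hq : ‖q‖ < 1)

include hq

theorem tendsto_sum_prod_oddTerm (k : ℕ) :
    Tendsto (fun N => ∑ t ∈ (range N).powersetCard k, ∏ j ∈ t, oddTerm q j) atTop
      (𝓝 (macC k q)) := by
  rw [macC_eq_tsum_prod_oddTerm]
  exact tendsto_sum_powersetCard_prod (f := oddTerm q)
    (summable_finsetProd_of_summable_norm (summable_norm_oddTerm hq)) k

theorem tendsto_sum_chebyshevCoeff_mul_centralGaussBinom :
    ∃ L ≠ 0, ∀ k, Tendsto (fun N : ℕ => ∑ n ∈ Icc (-(N : ℤ)) N,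
        chebyshevCoeff ℂ k n * ((-q) ^ n.natAbs ^ 2 * centralGaussBinom (q ^ 2) N n))
      atTop (𝓝 (theta k q * L)) := by
  have hq2 : ‖q ^ 2‖ < 1 := by
    rw [norm_pow]
    exact pow_lt_one₀ (norm_nonneg q) hq two_ne_zero
  obtain ⟨L, hL0, hL⟩ := tendsto_centralGaussBinom hq2
  obtain ⟨B, hB⟩ := exists_norm_centralGaussBinom_le hq2
  refine ⟨L, hL0, fun k => ?_⟩
  have hlim := tendsto_tsum_of_dominated_convergence
    ((summable_natAbs_sq_pow_mul_pow k (norm_nonneg q) hq).mul_right B)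
    (fun n => (hL n).const_mul (chebyshevCoeff ℂ k n * (-q) ^ n.natAbs ^ 2))
    (.of_forall fun N n => (norm_mul_le _ _).trans
      (mul_le_mul (norm_theta_summand_le k n le_rfl) (hB N n) (norm_nonneg _) (by positivity)))
  rw [tsum_mul_right] at hlim
  refine hlim.congr fun N => ?_
  simp only [mul_assoc]
  refine tsum_eq_sum fun n hn => ?_
  have hn' : N < |n| := lt_of_not_ge fun h => hn (mem_Icc.2 (abs_le.1 h))
  rw [centralGaussBinom_eq_zero _ hn', mul_zero, mul_zero]

theorem exists_theta_eq_mul_macC : ∃ L ≠ 0, ∀ k, theta k q = L * ((-2) ^ k * macC k q) := by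
  obtain ⟨L, hL0, hL⟩ := tendsto_sum_chebyshevCoeff_mul_centralGaussBinom hq
  obtain ⟨D, hD0, hD⟩ := tendsto_prod_one_sub_pow hq (f := fun j => 2 * j + 1)
    (fun i j h => by simpa using h) (fun j => by simp)
  refine ⟨D ^ 2 / L, div_ne_zero (pow_ne_zero 2 hD0) hL0, fun k => ?_⟩
  have hprod := (hD.pow 2).mul ((tendsto_sum_prod_oddTerm hq k).const_mul ((-2) ^ k))
  have h := tendsto_nhds_unique (hL k) (hprod.congr fun N =>
    (sum_chebyshevCoeff_mul_centralGaussBinom (fun m => pow_ne_one_of_norm_lt_one hq) N k).symm)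
  rw [div_mul_eq_mul_div, eq_div_iff hL0, h]

theorem theta_zero_ne_zero : theta 0 q ≠ 0 := by
  obtain ⟨L, hL0, hL⟩ := exists_theta_eq_mul_macC hq
  simpa [hL] using hL0

theorem theta_eq_mul_macC (k : ℕ) : theta k q = theta 0 q * ((-2) ^ k * macC k q) := by
  obtain ⟨L, -, hL⟩ := exists_theta_eq_mul_macC hq
  simp [hL]

theorem differentiableAt_theta (k : ℕ) : DifferentiableAt ℂ (theta k) q := by
  obtain ⟨r, hqr, hr⟩ := exists_between hq
  exact (Complex.differentiableOn_tsum_of_summable_norm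
    (summable_natAbs_sq_pow_mul_pow k ((norm_nonneg q).trans hqr.le) hr) (fun n => by fun_prop)
    Metric.isOpen_ball fun n w hw =>
      norm_theta_summand_le k n (mem_ball_zero_iff.1 hw).le).differentiableAt
    (Metric.isOpen_ball.mem_nhds (mem_ball_zero_iff.2 hqr))

theorem hasSum_theta (k : ℕ) :
    HasSum (fun n : ℤ => chebyshevCoeff ℂ k n * (-q) ^ n.natAbs ^ 2) (theta k q) :=
  (Summable.of_norm_bounded (summable_natAbs_sq_pow_mul_pow k (norm_nonneg q) hq)
    fun n => norm_theta_summand_le k n le_rfl).hasSum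

theorem mul_deriv_theta (k : ℕ) :
    q * deriv (theta k) q = k ^ 2 * theta k q + (2 * k + 1) * (k + 1) * theta (k + 1) q := by
  obtain ⟨r, hqr, hr⟩ := exists_between hq
  have hderiv := (Complex.hasSum_deriv_of_summable_norm
    (summable_natAbs_sq_pow_mul_pow k ((norm_nonneg q).trans hqr.le) hr) (fun n => by fun_prop)
    Metric.isOpen_ball (fun n w hw => norm_theta_summand_le k n (mem_ball_zero_iff.1 hw).le)
    (mem_ball_zero_iff.2 hqr)).mul_left q
  refine hderiv.unique ((((hasSum_theta hq k).mul_left (k ^ 2 : ℂ)).add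
    ((hasSum_theta hq (k + 1)).mul_left ((2 * k + 1) * (k + 1) : ℂ))).congr_fun fun n => ?_)
  have hcast : ((n.natAbs ^ 2 : ℕ) : ℂ) = (n : ℂ) ^ 2 := by
    rw [← Int.cast_natCast, Nat.cast_pow, Int.natAbs_sq, Int.cast_pow]
  rw [mul_deriv_const_mul_neg_pow, hcast]
  linear_combination -(-q) ^ n.natAbs ^ 2 * chebyshevCoeff_succ (R := ℂ) k n

theorem differentiableAt_macC (k : ℕ) : DifferentiableAt ℂ (macC k) q := by
  have hquot : DifferentiableAt ℂ (fun w => theta k w / (theta 0 w * (-2) ^ k)) q :=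
    (differentiableAt_theta hq k).div ((differentiableAt_theta hq 0).mul_const _)
      (mul_ne_zero (theta_zero_ne_zero hq) (by simp))
  refine hquot.congr_of_eventuallyEq ?_
  filter_upwards [Metric.isOpen_ball.mem_nhds (mem_ball_zero_iff.2 hq)] with w hw
  have hw' := mem_ball_zero_iff.1 hw
  rw [eq_div_iff (mul_ne_zero (theta_zero_ne_zero hw') (by simp)), theta_eq_mul_macC hw' k]
  ring

theorem mul_deriv_macC (k : ℕ) :
    q * deriv (macC k) q =
      (2 * macC 1 q + k ^ 2) * macC k q - (2 * k + 2) * (2 * k + 1) * macC (k + 1) q := by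
  have htheta : theta k =ᶠ[𝓝 q] fun w => theta 0 w * ((-2) ^ k * macC k w) := by
    filter_upwards [Metric.isOpen_ball.mem_nhds (mem_ball_zero_iff.2 hq)] with w hw
    exact theta_eq_mul_macC (mem_ball_zero_iff.1 hw) k
  have hderiv : deriv (theta k) q = deriv (theta 0) q * ((-2) ^ k * macC k q) +
      theta 0 q * ((-2) ^ k * deriv (macC k) q) :=
    htheta.deriv_eq.trans ((differentiableAt_theta hq 0).hasDerivAt.mul
      ((differentiableAt_macC hq k).hasDerivAt.const_mul _)).deriv
  have hk := mul_deriv_theta hq k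
  have h0 := mul_deriv_theta hq 0
  rw [theta_eq_mul_macC hq (0 + 1)] at h0
  rw [hderiv, theta_eq_mul_macC hq k, theta_eq_mul_macC hq (k + 1)] at hk
  have hne : theta 0 q * (-2) ^ k ≠ 0 := mul_ne_zero (theta_zero_ne_zero hq) (by simp)
  refine mul_left_cancel₀ hne ?_
  push_cast at h0
  linear_combination hk - (-2) ^ k * macC k q * h0

end Disc

end MacMahon

theorem stmt5 (k : ℕ) (hk : 1 ≤ k) (q : ℂ) (hq : ‖q‖ < 1) :
    macC k q = (1 / ((2 * (k : ℂ)) * (2 * (k : ℂ) - 1))) *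
      ((2 * macC 1 q + ((k : ℂ) - 1) ^ 2) * macC (k - 1) q
        - q * deriv (macC (k - 1)) q) := by
  obtain ⟨l, rfl⟩ := Nat.exists_eq_add_of_le' hk
  have h1 : (2 * l + 2 : ℂ) ≠ 0 := by exact_mod_cast (2 * l + 1).succ_ne_zero
  have h2 : (2 * l + 1 : ℂ) ≠ 0 := by exact_mod_cast (2 * l).succ_ne_zero
  have hfactor : 2 * ((l + 1 : ℕ) : ℂ) * (2 * (l + 1 : ℕ) - 1) = (2 * l + 2) * (2 * l + 1) := by
    push_cast
    ring
  rw [Nat.add_sub_cancel, MacMahon.mul_deriv_macC hq, hfactor, one_div,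
    eq_inv_mul_iff_mul_eq₀ (mul_ne_zero h1 h2)]
  push_cast
  ring
end

section
/- For every complex number q with |q| < 1 and every complex number x, the identity 1 + 2·∑_{n=1}^∞ T_{2n}(x/2)·q^{n²} = (∏_{m=1}^∞ (1 − q^{2m})) · ∏_{m=1}^∞ ((1 − q^{2m−1})² + x²·q^{2m−1}) holds, the infinite products converging absolutely. -/
/-!
Put `t n = T_{2n}(x/2)`. The product formula for Chebyshev polynomials gives the three-term
recurrence `t (n + 1) + t (n - 1) = (x ^ 2 - 2) * t n`, and the identity is an instance of a form
of the Jacobi triple product valid for every bi-infinite solution of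
`t (n + 1) + t (n - 1) = u * t n`:
`∑ q ^ (n ^ 2) * t n = t 0 * ∏ (1 - q ^ (2 m)) * ∏ (1 + u * q ^ (2 m - 1) + q ^ (4 m - 2))`.
(The classical case is `t n = z ^ n`, `u = z + z⁻¹`.) Its finite version replaces `q ^ (n ^ 2)` by
`q ^ (n ^ 2)` times the central Gaussian binomial coefficient `[2N choose N + n]` in base `q ^ 2`;
each factor of the second product then amounts to one Pascal-type recurrence. These coefficients
are bounded and tend to `∏ (1 - q ^ (2 m))⁻¹`, and `t` grows at most geometrically, so dominated
convergence applies.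
-/

open Filter Topology Polynomial

section GaussianBinomial

/-- The `q`-Pochhammer symbol `(p; p)_k`, the `q`-analogue of the factorial from which Gaussian
binomial coefficients are built. -/
def qPochhammerSelf {R : Type*} [CommRing R] (p : R) (k : ℕ) : R :=
  ∏ i ∈ Finset.range k, (1 - p ^ (i + 1))

theorem qPochhammerSelf_succ {R : Type*} [CommRing R] (p : R) (k : ℕ) :
    qPochhammerSelf p (k + 1) = qPochhammerSelf p k * (1 - p ^ (k + 1)) :=
  Finset.prod_range_succ _ _

variable {K : Type*} [Field K] {p q : K}

/-- The reciprocal `1 / (p; p)_k`, extended by `0` to negative `k`, which is the extension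
compatible with the recurrence in `k`. -/
def qPochhammerSelfInv (p : K) : ℤ → K
  | .ofNat k => (qPochhammerSelf p k)⁻¹
  | .negSucc _ => 0

/-- The central Gaussian binomial coefficient `[2N choose N + n]` in base `p`, the weight of the
`n`-th term in the finite triple product; it vanishes for `N < |n|`. -/
def centralGaussBinom (p : K) (N : ℕ) (n : ℤ) : K :=
  qPochhammerSelf p (2 * N) * qPochhammerSelfInv p (N - n) * qPochhammerSelfInv p (N + n)

theorem one_sub_pow_succ_ne_zero (hp : ¬IsOfFinOrder p) (i : ℕ) : 1 - p ^ (i + 1) ≠ 0 :=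
  sub_ne_zero.mpr fun h => hp <| isOfFinOrder_iff_pow_eq_one.mpr ⟨i + 1, i.succ_pos, h.symm⟩

theorem qPochhammerSelfInv_natCast (p : K) (k : ℕ) :
    qPochhammerSelfInv p k = (qPochhammerSelf p k)⁻¹ :=
  rfl

theorem qPochhammerSelfInv_of_neg (p : K) : ∀ {k : ℤ}, k < 0 → qPochhammerSelfInv p k = 0
  | .negSucc _, _ => rfl

theorem qPochhammerSelfInv_sub_one (hp : ¬IsOfFinOrder p) (k : ℤ) :
    qPochhammerSelfInv p (k - 1) = (1 - p ^ k) * qPochhammerSelfInv p k := by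
  rcases lt_or_ge k 0 with hk | hk
  · rw [qPochhammerSelfInv_of_neg p hk, qPochhammerSelfInv_of_neg p (by lia), mul_zero]
  lift k to ℕ using hk
  cases k with
  | zero => rw [qPochhammerSelfInv_of_neg p (by simp)]; simp
  | succ k =>
    rw [Nat.cast_succ, add_sub_cancel_right, ← Nat.cast_succ, qPochhammerSelfInv_natCast,
      qPochhammerSelfInv_natCast, qPochhammerSelf_succ, zpow_natCast, mul_inv_rev,
      mul_inv_cancel_left₀ (one_sub_pow_succ_ne_zero hp k)]

theorem centralGaussBinom_zero_left (p : K) (n : ℤ) :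
    centralGaussBinom p 0 n = if n = 0 then 1 else 0 := by
  rcases lt_trichotomy n 0 with hn | rfl | hn
  · simp [centralGaussBinom, qPochhammerSelfInv_of_neg p hn, hn.ne]
  · simp [centralGaussBinom, qPochhammerSelfInv, qPochhammerSelf]
  · simp [centralGaussBinom, qPochhammerSelfInv_of_neg p (neg_neg_of_pos hn), hn.ne']

theorem centralGaussBinom_succ (hp₀ : p ≠ 0) (hp : ¬IsOfFinOrder p) (N : ℕ) (n : ℤ) :
    centralGaussBinom p (N + 1) n = (1 + p ^ (2 * N + 1)) * centralGaussBinom p N n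
      + p ^ (N - n + 1) * centralGaussBinom p N (n - 1)
      + p ^ (N + n + 1) * centralGaussBinom p N (n + 1) := by
  obtain ⟨j, hj⟩ : ∃ j : ℤ, j = N - n + 1 := ⟨_, rfl⟩
  obtain ⟨k, hk⟩ : ∃ k : ℤ, k = N + n + 1 := ⟨_, rfl⟩
  have hjk : p ^ (2 * N + 1 + 1) = p ^ j * p ^ k := by
    rw [← zpow_add₀ hp₀, ← zpow_natCast, hj, hk]
    congr 1
    push_cast
    ring
  have hjk' : p ^ (2 * N + 1) = p ^ j * p ^ k * p⁻¹ := by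
    rw [← hjk, pow_succ p (2 * N + 1), mul_inv_cancel_right₀ hp₀]
  have hinv := qPochhammerSelfInv_sub_one hp
  simp only [centralGaussBinom, ← hj, ← hk]
  rw [show 2 * (N + 1) = 2 * N + 1 + 1 by ring, qPochhammerSelf_succ, qPochhammerSelf_succ,
    show ((N + 1 : ℕ) : ℤ) - n = j by grind, show ((N + 1 : ℕ) : ℤ) + n = k by grind,
    show N - n = j - 1 by grind, show N + n = k - 1 by grind,
    show N - (n - 1) = j by grind, show N + (n - 1) = k - 1 - 1 by grind,
    show N - (n + 1) = j - 1 - 1 by grind, show N + (n + 1) = k by grind,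
    hinv (j - 1), hinv (k - 1), hinv j, hinv k, hjk, hjk', zpow_sub_one₀ hp₀, zpow_sub_one₀ hp₀]
  ring

theorem centralGaussBinom_succ_mul_zpow_sq (hq₀ : q ≠ 0) (hq : ¬IsOfFinOrder q) (N : ℕ) (n : ℤ) :
    centralGaussBinom (q ^ 2) (N + 1) n * q ^ n ^ 2 =
      (1 + (q ^ (2 * N + 1)) ^ 2) * (centralGaussBinom (q ^ 2) N n * q ^ n ^ 2)
      + q ^ (2 * N + 1) * (centralGaussBinom (q ^ 2) N (n - 1) * q ^ (n - 1) ^ 2)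
      + q ^ (2 * N + 1) * (centralGaussBinom (q ^ 2) N (n + 1) * q ^ (n + 1) ^ 2) := by
  have shift (k m : ℤ) (h : 2 * k + n ^ 2 = (2 * N + 1 : ℕ) + m) :
      (q ^ 2) ^ k * q ^ n ^ 2 = q ^ (2 * N + 1) * q ^ m := by
    rw [← zpow_natCast q 2, ← zpow_mul, ← zpow_natCast q (2 * N + 1), ← zpow_add₀ hq₀,
      ← zpow_add₀ hq₀]
    exact congrArg (q ^ ·) h
  have hsub := shift (N - n + 1) ((n - 1) ^ 2) (by push_cast; ring)
  have hadd := shift (N + n + 1) ((n + 1) ^ 2) (by push_cast; ring)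
  rw [centralGaussBinom_succ (pow_ne_zero 2 hq₀) fun h => hq (h.of_pow two_ne_zero)]
  linear_combination centralGaussBinom (q ^ 2) N (n - 1) * hsub
    + centralGaussBinom (q ^ 2) N (n + 1) * hadd

-- The induction runs over all solutions `t` at once: the two neighbouring coefficients are absorbed
-- by the shifted solutions `t (· + 1)` and `t (· - 1)`.
theorem hasSum_centralGaussBinom_mul [TopologicalSpace K] [IsTopologicalSemiring K] (hq₀ : q ≠ 0)
    (hq : ¬IsOfFinOrder q) {t : ℤ → K} {u : K} (ht : ∀ n, t (n + 1) + t (n - 1) = u * t n) (N : ℕ) :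
    HasSum (fun n => centralGaussBinom (q ^ 2) N n * q ^ n ^ 2 * t n)
      (t 0 * ∏ m ∈ Finset.range N, (1 + u * q ^ (2 * m + 1) + (q ^ (2 * m + 1)) ^ 2)) := by
  induction N generalizing t with
  | zero =>
    convert hasSum_ite_eq (0 : ℤ) (t 0) using 2 with n
    · rcases eq_or_ne n 0 with rfl | hn <;> simp [centralGaussBinom_zero_left, *]
    · simp
  | succ N ih =>
    have hsucc := (Equiv.subRight (1 : ℤ)).hasSum_iff.mpr
      (ih (t := fun n => t (n + 1)) fun n => by simpa [sub_add_comm] using ht (n + 1))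
    have hpred := (Equiv.addRight (1 : ℤ)).hasSum_iff.mpr
      (ih (t := fun n => t (n - 1)) fun n => by simpa [sub_add_comm] using ht (n - 1))
    have hcomb := (((ih ht).mul_left (1 + (q ^ (2 * N + 1)) ^ 2)).add
      (hsucc.mul_left (q ^ (2 * N + 1)))).add (hpred.mul_left (q ^ (2 * N + 1)))
    have hterm (n : ℤ) := centralGaussBinom_succ_mul_zpow_sq hq₀ hq N n
    convert! hcomb using 1
    · ext n
      simp only [hterm, Function.comp_apply, Equiv.coe_addRight, Equiv.subRight_apply,
        sub_add_cancel, add_sub_cancel_right]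
      ring
    · rw [Finset.prod_range_succ]
      linear_combination (-q ^ (2 * N + 1) * ∏ m ∈ Finset.range N,
        (1 + u * q ^ (2 * m + 1) + (q ^ (2 * m + 1)) ^ 2)) * ht 0

end GaussianBinomial

section Growth

theorem norm_add_norm_succ_le_of_recurrence {R : Type*} [SeminormedRing R] {s : ℕ → R} {u : R}
    (hs : ∀ n, s (n + 2) + s n = u * s (n + 1)) (n : ℕ) :
    ‖s n‖ + ‖s (n + 1)‖ ≤ (‖s 0‖ + ‖s 1‖) * (‖u‖ + 1) ^ n := by
  induction n with
  | zero => simp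
  | succ n ih =>
    have hnext : ‖s (n + 2)‖ ≤ ‖u‖ * ‖s (n + 1)‖ + ‖s n‖ := by
      rw [eq_sub_of_add_eq (hs n)]
      exact (norm_sub_le _ _).trans (by gcongr; exact norm_mul_le _ _)
    calc ‖s (n + 1)‖ + ‖s (n + 2)‖
        ≤ (‖s n‖ + ‖s (n + 1)‖) * (‖u‖ + 1) := by
          nlinarith [mul_nonneg (norm_nonneg (s n)) (norm_nonneg u)]
      _ ≤ (‖s 0‖ + ‖s 1‖) * (‖u‖ + 1) ^ n * (‖u‖ + 1) := by gcongr
      _ = (‖s 0‖ + ‖s 1‖) * (‖u‖ + 1) ^ (n + 1) := by ring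

theorem summable_pow_sq_mul_pow {r : ℝ} (hr₀ : 0 ≤ r) (hr₁ : r < 1) (b : ℝ) :
    Summable fun n : ℕ => r ^ n ^ 2 * b ^ n := by
  have hlim : Tendsto (fun n : ℕ => |r ^ n * b|) atTop (𝓝 0) := by
    simpa using ((tendsto_pow_atTop_nhds_zero_of_lt_one hr₀ hr₁).mul_const b).abs
  refine Summable.of_norm_bounded_eventually_nat summable_geometric_two ?_
  filter_upwards [hlim.eventually_le_const (by norm_num : (0 : ℝ) < 1 / 2)] with n hn
  rw [sq, pow_mul, ← mul_pow, norm_pow]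
  exact pow_le_pow_left₀ (abs_nonneg _) hn n

variable {K : Type*} [NormedField K] {q u : K}

theorem summable_norm_pow_sq_mul_of_recurrence (hq : ‖q‖ < 1) {s : ℕ → K}
    (hs : ∀ n, s (n + 2) + s n = u * s (n + 1)) : Summable fun n : ℕ => ‖q ^ n ^ 2 * s n‖ := by
  refine ((summable_pow_sq_mul_pow (norm_nonneg q) hq (‖u‖ + 1)).mul_left
    (‖s 0‖ + ‖s 1‖)).of_nonneg_of_le (fun _ => norm_nonneg _) fun n => ?_
  calc ‖q ^ n ^ 2 * s n‖ = ‖q‖ ^ n ^ 2 * ‖s n‖ := by rw [norm_mul, norm_pow]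
    _ ≤ ‖q‖ ^ n ^ 2 * ((‖s 0‖ + ‖s 1‖) * (‖u‖ + 1) ^ n) := by
      gcongr
      exact (le_add_of_nonneg_right (norm_nonneg _)).trans
        (norm_add_norm_succ_le_of_recurrence hs n)
    _ = (‖s 0‖ + ‖s 1‖) * (‖q‖ ^ n ^ 2 * (‖u‖ + 1) ^ n) := by ring

theorem summable_norm_zpow_sq_mul_of_recurrence (hq : ‖q‖ < 1) {t : ℤ → K}
    (ht : ∀ n, t (n + 1) + t (n - 1) = u * t n) : Summable fun n : ℤ => ‖q ^ n ^ 2 * t n‖ := by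
  refine .of_nat_of_neg ?_ ?_
  · exact_mod_cast summable_norm_pow_sq_mul_of_recurrence hq (s := fun n => t n) fun n => by
      simpa [add_assoc, one_add_one_eq_two] using ht (n + 1)
  · simp only [neg_sq]
    exact_mod_cast summable_norm_pow_sq_mul_of_recurrence hq (s := fun n => t (-n)) fun n => by
      simpa [add_comm, ← sub_eq_add_neg, sub_sub, one_add_one_eq_two] using ht (-(n + 1))

end Growth

section TripleProduct

variable {K : Type*} [NormedField K] {p q : K}

theorem not_isOfFinOrder_of_norm_lt_one (hp : ‖p‖ < 1) : ¬IsOfFinOrder p :=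
  fun h => hp.ne h.norm_eq_one

theorem summable_norm_pow_of_injective (hq : ‖q‖ < 1) {e : ℕ → ℕ} (he : e.Injective) :
    Summable fun m => ‖q ^ e m‖ := by
  simpa only [norm_pow, Function.comp_def] using
    (summable_geometric_of_lt_one (norm_nonneg q) hq).comp_injective he

variable [CompleteSpace K]

theorem multipliable_one_sub_pow_succ (hp : ‖p‖ < 1) :
    Multipliable fun i : ℕ => 1 - p ^ (i + 1) := by
  simpa only [sub_eq_add_neg] using
    multipliable_one_add_of_summable (f := fun i : ℕ => -p ^ (i + 1))
      (by simpa only [norm_neg] using summable_norm_pow_of_injective hp (add_left_injective 1))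

theorem tprod_one_sub_pow_succ_ne_zero (hp : ‖p‖ < 1) : ∏' i : ℕ, (1 - p ^ (i + 1)) ≠ 0 := by
  simp only [sub_eq_add_neg]
  refine tprod_one_add_ne_zero_of_summable (fun i => ?_) ?_
  · simpa only [sub_eq_add_neg] using
      one_sub_pow_succ_ne_zero (not_isOfFinOrder_of_norm_lt_one hp) i
  · simpa only [norm_neg] using summable_norm_pow_of_injective hp (add_left_injective 1)

theorem multipliable_one_add_mul_pow_add_sq (hq : ‖q‖ < 1) (u : K) :
    Multipliable fun m : ℕ => 1 + u * q ^ (2 * m + 1) + (q ^ (2 * m + 1)) ^ 2 := by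
  have hinj : Function.Injective fun m : ℕ => 2 * m + 1 := fun a b h => by grind
  have hodd := summable_norm_pow_of_injective hq hinj
  have hsq : Summable fun m : ℕ => ‖(q ^ (2 * m + 1)) ^ 2‖ := by
    simpa only [← pow_mul, Function.comp_apply] using
      summable_norm_pow_of_injective hq ((mul_left_injective₀ two_ne_zero).comp hinj)
  have hsum : Summable fun m : ℕ => ‖u * q ^ (2 * m + 1) + (q ^ (2 * m + 1)) ^ 2‖ :=
    ((hodd.mul_left ‖u‖).add hsq).of_nonneg_of_le (fun _ => norm_nonneg _) fun _ =>
      (norm_add_le _ _).trans_eq (by rw [norm_mul])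
  simpa only [add_assoc] using multipliable_one_add_of_summable hsum

theorem tendsto_qPochhammerSelf (hp : ‖p‖ < 1) :
    Tendsto (qPochhammerSelf p) atTop (𝓝 (∏' i : ℕ, (1 - p ^ (i + 1)))) :=
  (multipliable_one_sub_pow_succ hp).tendsto_prod_tprod_nat

theorem tendsto_qPochhammerSelfInv (hp : ‖p‖ < 1) :
    Tendsto (qPochhammerSelfInv p) atTop (𝓝 (∏' i : ℕ, (1 - p ^ (i + 1)))⁻¹) := by
  rw [← Nat.map_cast_int_atTop, tendsto_map'_iff]
  exact (tendsto_qPochhammerSelf hp).inv₀ (tprod_one_sub_pow_succ_ne_zero hp)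

theorem exists_norm_qPochhammerSelf_le (hp : ‖p‖ < 1) :
    ∃ C, ∀ k, ‖qPochhammerSelf p k‖ ≤ C := by
  simpa using (Metric.isBounded_range_of_tendsto _ (tendsto_qPochhammerSelf hp)).exists_norm_le

theorem exists_norm_qPochhammerSelfInv_le (hp : ‖p‖ < 1) :
    ∃ C, ∀ k, ‖qPochhammerSelfInv p k‖ ≤ C := by
  obtain ⟨C, hC⟩ := (Metric.isBounded_range_of_tendsto _ <|
    (tendsto_qPochhammerSelfInv hp).comp tendsto_natCast_atTop_atTop).exists_norm_le
  refine ⟨C, fun k => ?_⟩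
  rcases lt_or_ge k 0 with hk | hk
  · rw [qPochhammerSelfInv_of_neg p hk, norm_zero]
    exact (norm_nonneg _).trans (hC _ ⟨0, rfl⟩)
  · lift k to ℕ using hk
    exact hC _ ⟨k, rfl⟩

theorem exists_norm_centralGaussBinom_le (hp : ‖p‖ < 1) :
    ∃ C, ∀ N n, ‖centralGaussBinom p N n‖ ≤ C := by
  obtain ⟨A, hA⟩ := exists_norm_qPochhammerSelf_le hp
  obtain ⟨B, hB⟩ := exists_norm_qPochhammerSelfInv_le hp
  have hA₀ : 0 ≤ A := (norm_nonneg _).trans (hA 0)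
  have hB₀ : 0 ≤ B := (norm_nonneg _).trans (hB 0)
  exact ⟨A * B * B, fun N n => norm_mul₃_le.trans <| by gcongr; exacts [hA _, hB _, hB _]⟩

theorem tendsto_centralGaussBinom (hp : ‖p‖ < 1) (n : ℤ) :
    Tendsto (centralGaussBinom p · n) atTop (𝓝 (∏' i : ℕ, (1 - p ^ (i + 1)))⁻¹) := by
  have hlim := tprod_one_sub_pow_succ_ne_zero hp
  have hnum := (tendsto_qPochhammerSelf hp).comp (tendsto_id.const_mul_atTop' two_pos)
  have hden (m : ℤ) := (tendsto_qPochhammerSelfInv hp).comp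
    (tendsto_atTop_add_const_right _ m (tendsto_natCast_atTop_atTop (R := ℤ)))
  have h := (hnum.mul (hden (-n))).mul (hden n)
  rwa [mul_inv_cancel₀ hlim, one_mul] at h

theorem hasSum_zpow_sq_mul_of_recurrence (hq : ‖q‖ < 1) {t : ℤ → K} {u : K}
    (ht : ∀ n, t (n + 1) + t (n - 1) = u * t n) :
    HasSum (fun n : ℤ => q ^ n ^ 2 * t n)
      (t 0 * ((∏' m : ℕ, (1 - (q ^ 2) ^ (m + 1))) *
        ∏' m : ℕ, (1 + u * q ^ (2 * m + 1) + (q ^ (2 * m + 1)) ^ 2))) := by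
  have hsummable := summable_norm_zpow_sq_mul_of_recurrence hq ht
  rw [hsummable.of_norm.hasSum_iff]
  rcases eq_or_ne q 0 with rfl | hq₀
  · rw [tsum_eq_single 0 fun n hn => by simp [zero_zpow, hn]]
    simp
  have hp : ‖q ^ 2‖ < 1 := by simpa using pow_lt_one₀ (norm_nonneg q) hq two_ne_zero
  obtain ⟨C, hC⟩ := exists_norm_centralGaussBinom_le hp
  have hlim := tendsto_tsum_of_dominated_convergence (hsummable.mul_left C)
    (fun n => (tendsto_centralGaussBinom hp n).mul_const (q ^ n ^ 2 * t n))
    (.of_forall fun N n => (norm_mul_le _ _).trans (by gcongr; exact hC N n))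
  have hfinite N :=
    (hasSum_centralGaussBinom_mul hq₀ (not_isOfFinOrder_of_norm_lt_one hq) ht N).tsum_eq
  simp only [← mul_assoc, hfinite] at hlim
  have hprod := (multipliable_one_add_mul_pow_add_sq hq u).tendsto_prod_tprod_nat.const_mul (t 0)
  have heq := tendsto_nhds_unique hlim hprod
  simp only [mul_assoc, tsum_mul_left] at heq
  rw [inv_mul_eq_iff_eq_mul₀ (tprod_one_sub_pow_succ_ne_zero hp)] at heq
  rw [heq, mul_left_comm]

theorem tsum_pow_sq_mul_of_recurrence_of_even (hq : ‖q‖ < 1) {t : ℤ → K} {u : K}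
    (ht : ∀ n, t (n + 1) + t (n - 1) = u * t n) (heven : t.Even) :
    t 0 + 2 * ∑' n : ℕ, t (n + 1) * q ^ (n + 1) ^ 2 =
      t 0 * ((∏' m : ℕ, (1 - (q ^ 2) ^ (m + 1))) *
        ∏' m : ℕ, (1 + u * q ^ (2 * m + 1) + (q ^ (2 * m + 1)) ^ 2)) := by
  have hsum := hasSum_zpow_sq_mul_of_recurrence hq ht
  have hsplit := tsum_int_eq_zero_add_two_mul_tsum_pnat
    (fun n => by simp only [neg_sq, heven n]) hsum.summable
  rw [tsum_pnat_eq_tsum_succ (f := fun n : ℕ => q ^ (n : ℤ) ^ 2 * t n), hsum.tsum_eq] at hsplit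
  have hpow (n : ℕ) : q ^ ((n + 1 : ℕ) : ℤ) ^ 2 = q ^ (n + 1) ^ 2 := mod_cast rfl
  simp only [hpow, mul_comm (q ^ _)] at hsplit
  simp [hsplit]

end TripleProduct

section Chebyshev

theorem eval_chebyshevT_two_mul_recurrence {R : Type*} [CommRing R] (y : R) (n : ℤ) :
    (Chebyshev.T R (2 * (n + 1))).eval y + (Chebyshev.T R (2 * (n - 1))).eval y =
      ((2 * y) ^ 2 - 2) * (Chebyshev.T R (2 * n)).eval y := by
  have hprod := congrArg (eval y) (Chebyshev.T_mul_T R (2 * n) 2)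
  simp only [Chebyshev.T_two, eval_mul, eval_add, eval_sub, eval_pow, eval_ofNat, eval_X,
    eval_one] at hprod
  rw [mul_add_one, mul_sub_one, ← hprod]
  ring

variable {K : Type*} [NormedField K] [CompleteSpace K] [NeZero (2 : K)]

theorem stmt12_general (q x : K) (hq : ‖q‖ < 1) :
    Multipliable (fun m : ℕ => (1 : K) - q ^ (2 * (m + 1))) ∧
    Multipliable (fun m : ℕ => (1 - q ^ (2 * (m + 1) - 1)) ^ 2 + x ^ 2 * q ^ (2 * (m + 1) - 1)) ∧
    1 + 2 * ∑' n : ℕ,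
        (Polynomial.Chebyshev.T K (2 * ((n : ℤ) + 1))).eval (x / 2) * q ^ ((n + 1) ^ 2) =
      (∏' m : ℕ, (1 - q ^ (2 * (m + 1)))) *
        ∏' m : ℕ, ((1 - q ^ (2 * (m + 1) - 1)) ^ 2 + x ^ 2 * q ^ (2 * (m + 1) - 1)) := by
  have hfactor (m : ℕ) : (1 - q ^ (2 * (m + 1) - 1)) ^ 2 + x ^ 2 * q ^ (2 * (m + 1) - 1) =
      1 + (x ^ 2 - 2) * q ^ (2 * m + 1) + (q ^ (2 * m + 1)) ^ 2 := by
    rw [show 2 * (m + 1) - 1 = 2 * m + 1 by lia]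
    ring
  have hp : ‖q ^ 2‖ < 1 := by simpa using pow_lt_one₀ (norm_nonneg q) hq two_ne_zero
  simp only [hfactor, pow_mul q 2 (_ + 1)]
  refine ⟨multipliable_one_sub_pow_succ hp, multipliable_one_add_mul_pow_add_sq hq _, ?_⟩
  simpa [mul_div_cancel₀ x (two_ne_zero' K)] using tsum_pow_sq_mul_of_recurrence_of_even hq
    (t := fun n => (Chebyshev.T K (2 * n)).eval (x / 2))
    (eval_chebyshevT_two_mul_recurrence (x / 2)) fun n => by simp only [mul_neg, Chebyshev.T_neg]

end Chebyshev

theorem stmt12 (q x : ℂ) (hq : ‖q‖ < 1) :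
    Multipliable (fun m : ℕ => (1 : ℂ) - q ^ (2 * (m + 1))) ∧
    Multipliable (fun m : ℕ => (1 - q ^ (2 * (m + 1) - 1)) ^ 2 + x ^ 2 * q ^ (2 * (m + 1) - 1)) ∧
    1 + 2 * ∑' n : ℕ,
        (Polynomial.Chebyshev.T ℂ (2 * ((n : ℤ) + 1))).eval (x / 2) * q ^ ((n + 1) ^ 2) =
      (∏' m : ℕ, (1 - q ^ (2 * (m + 1)))) *
        ∏' m : ℕ, ((1 - q ^ (2 * (m + 1) - 1)) ^ 2 + x ^ 2 * q ^ (2 * (m + 1) - 1)) :=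
  stmt12_general q x hq
end
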